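/- arXiv:2402.09185 — 3 statements merged into one kernel-verified Lean document; each statement's English description precedes it below -/
import Mathlib

section
/- Let P ⊆ ℕ^d be a well-directed periodic set and let π : ℕ^d → ℕ^k be the projection onto a subset of k of the coordinates. Then π(P) is a well-directed periodic subset of ℕ^k. -/
/-- Vectors of naturals of dimension `d`. -/
abbrev NVec (d : ℕ) := Fin d → ℕ

/-- Coordinatewise cast of a natural vector into a rational vector. -/
def castQ {d : ℕ} (x : NVec d) : Fin d → ℚ := fun i => (x i : ℚ)

/-- A set in a commutative monoid is periodic if it contains `0` and is closed
under addition. -/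
def IsPeriodic {M : Type*} [AddCommMonoid M] (P : Set M) : Prop :=
  0 ∈ P ∧ ∀ p ∈ P, ∀ q ∈ P, p + q ∈ P

/-- `P ⊆ ℕ^d` is well-directed: every sequence of elements of `P` has an infinite
subsequence `(p_{m_k})` such that `p_{m_j} + ℕ·(p_{m_k} − p_{m_j}) ⊆ P` for all
`j ≤ k`. -/
def WellDirected {d : ℕ} (P : Set (NVec d)) : Prop :=
  ∀ p : ℕ → NVec d, (∀ m, p m ∈ P) →
    ∃ φ : ℕ → ℕ, StrictMono φ ∧
      ∀ j k : ℕ, j ≤ k → ∀ t : ℕ, ∃ q ∈ P,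
        castQ q = castQ (p (φ j)) + (t : ℚ) • (castQ (p (φ k)) - castQ (p (φ j)))

/-!
Clearing the subtraction, `x + t (y - x) ∈ P` says that some `q ∈ P` satisfies
`q + t x = x + t y`. This is an equation between elements of `ℕ^d`, so every additive map
`ℕ^d → ℕ^k` preserves it, and a sequence in the image of `P` is handled by lifting it to `P`.
-/

theorem castQ_eq_add_smul_sub_iff {d : ℕ} (q x y : NVec d) (t : ℕ) :
    castQ q = castQ x + (t : ℚ) • (castQ y - castQ x) ↔ q + t • x = x + t • y := by
  simp only [funext_iff, castQ, Pi.add_apply, Pi.sub_apply, Pi.smul_apply, smul_eq_mul]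
  refine forall_congr' fun i => ?_
  rw [mul_sub, ← add_sub_assoc, eq_sub_iff_add_eq]
  norm_cast

theorem IsPeriodic.image {M N : Type*} [AddCommMonoid M] [AddCommMonoid N] {P : Set M}
    (hP : IsPeriodic P) (f : M →+ N) : IsPeriodic (f '' P) := by
  refine ⟨⟨0, hP.1, map_zero f⟩, ?_⟩
  rintro _ ⟨x, hx, rfl⟩ _ ⟨y, hy, rfl⟩
  exact ⟨x + y, hP.2 x hx y hy, map_add f x y⟩

theorem WellDirected.image {d k : ℕ} {P : Set (NVec d)} (hP : WellDirected P)
    (f : NVec d →+ NVec k) : WellDirected (f '' P) := by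
  intro p hp
  choose preimage preimage_mem map_preimage using hp
  obtain ⟨φ, hφ, h_directed⟩ := hP preimage preimage_mem
  refine ⟨φ, hφ, fun j k hjk t => ?_⟩
  obtain ⟨q, hq, hq_eq⟩ := h_directed j k hjk t
  rw [castQ_eq_add_smul_sub_iff] at hq_eq
  refine ⟨f q, Set.mem_image_of_mem f hq, ?_⟩
  rw [castQ_eq_add_smul_sub_iff, ← map_preimage, ← map_preimage]
  simpa only [map_add, map_nsmul] using congrArg f hq_eq

theorem proj_wellDirected_periodic_general {d k : ℕ} (f : NVec d →+ NVec k) {P : Set (NVec d)}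
    (hP : IsPeriodic P) (hwd : WellDirected P) :
    IsPeriodic (f '' P) ∧ WellDirected (f '' P) :=
  ⟨hP.image f, hwd.image f⟩

/-- The projection of a well-directed periodic set onto a subset of
the coordinates (given by an injection `ι : Fin k → Fin d`) is a well-directed
periodic subset of `ℕ^k`. -/
theorem proj_wellDirected_periodic {d k : ℕ} (ι : Fin k → Fin d)
    (hι : Function.Injective ι) (P : Set (NVec d))
    (hP : IsPeriodic P) (hwd : WellDirected P) :
    IsPeriodic ((fun x : NVec d => x ∘ ι) '' P) ∧
    WellDirected ((fun x : NVec d => x ∘ ι) '' P) :=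
  proj_wellDirected_periodic_general (LinearMap.funLeft ℕ ℕ ι).toAddMonoidHom hP hwd
end

section
/- Let R ⊆ ℕ^d × ℕ^d be a monotone relation with reflexive transitive closure →*, let c ∈ ℕ^d, and let P be a periodic relation with P ⊆ P_c := {(x,y) : c+x →* c+y}. Define Q := {q ∈ ℕ^d : ∃(x,y) ∈ P, c+x →* q and q →* c+y} and H := {h ∈ ℕ^d : c+h ∈ Q}. Then Q + H ⊆ Q, i.e. for every q ∈ Q and h ∈ H, also q + h ∈ Q. -/
/-- A relation on `ℕ^d` is monotone if `(x,y) ∈ R` implies `(x+v, y+v) ∈ R` for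
every `v ∈ ℕ^d`. -/
def MonotoneRel {d : ℕ} (R : NVec d → NVec d → Prop) : Prop :=
  ∀ x y, R x y → ∀ v : NVec d, R (x + v) (y + v)

/-- A relation `P ⊆ ℕ^d × ℕ^d` is periodic if it contains `(0,0)` and is closed
under componentwise addition. -/
def IsPeriodicRel {d : ℕ} (P : Set (NVec d × NVec d)) : Prop :=
  (0, 0) ∈ P ∧ ∀ p ∈ P, ∀ q ∈ P, (p.1 + q.1, p.2 + q.2) ∈ P

/-- The transformer relation `P_c` of a configuration `c` with respect to the
reflexive transitive closure of `R`. -/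
def transformer {d : ℕ} (R : NVec d → NVec d → Prop) (c : NVec d) :
    Set (NVec d × NVec d) :=
  {p | Relation.ReflTransGen R (c + p.1) (c + p.2)}

/-- `Q`: the set of configurations reachable along some run from `c+x` to `c+y`
with `(x,y) ∈ P`. -/
def QSet {d : ℕ} (R : NVec d → NVec d → Prop) (c : NVec d)
    (P : Set (NVec d × NVec d)) : Set (NVec d) :=
  {q | ∃ p ∈ P, Relation.ReflTransGen R (c + p.1) q ∧ Relation.ReflTransGen R q (c + p.2)}

/-- `H`: the set of intraproductions, i.e. vectors `h` with `c + h ∈ Q`. -/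
def HSet {d : ℕ} (R : NVec d → NVec d → Prop) (c : NVec d)
    (P : Set (NVec d × NVec d)) : Set (NVec d) :=
  {h | c + h ∈ QSet R c P}

/-!
Let `q` lie between `c + x₁` and `c + y₁`, and `c + h` between `c + x₂` and `c + y₂`. Translating
the run from `c + x₂` to `c + h` by `x₁` and the run from `c + x₁` to `q` by `h` makes them meet at
`c + x₁ + h`, so they compose to a run from `c + x₁ + x₂` to `q + h`. The same argument for the
reversed relation gives a run from `q + h` to `c + y₁ + y₂`.
-/

/-- The elements lying `T`-between `c + x` and `c + y` for some `(x, y) ∈ P`. This is `QSet` with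
the reflexive transitive closure of `R` replaced by a relation `T` on an additive structure `M`. -/
def betweenSet {M : Type*} [Add M] (T : M → M → Prop) (c : M) (P : Set (M × M)) : Set M :=
  {q | ∃ p ∈ P, T (c + p.1) q ∧ T q (c + p.2)}

theorem covariant_reflTransGen {M N : Type*} {μ : M → N → N} {r : N → N → Prop}
    (hr : Covariant M N μ r) : Covariant M N μ (Relation.ReflTransGen r) :=
  fun m _ _ => Relation.ReflTransGen.lift (μ m) (fun _ _ hxy => hr m hxy) _ _

section Translation

variable {M : Type*} [AddCommSemigroup M] {T : M → M → Prop} [IsTrans M T]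

theorem rel_add_add_of_rel_add (hT : Covariant M M (fun v x => x + v) T) {c a b q h : M}
    (hq : T (c + a) q) (hh : T (c + b) (c + h)) : T (c + (a + b)) (q + h) := by
  calc
    c + (a + b) = c + b + a := by rw [add_comm a b, add_assoc]
    T _ (c + h + a) := hT a hh
    _ = c + a + h := add_right_comm c h a
    T _ (q + h) := hT h hq

theorem qSet_add_hSet_subset_general (hT : Covariant M M (fun v x => x + v) T) (c : M)
    (P : AddSubsemigroup (M × M)) :
    ∀ q ∈ betweenSet T c P, ∀ h, c + h ∈ betweenSet T c P → q + h ∈ betweenSet T c P := by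
  rintro q ⟨p, hp, hpq, hqp⟩ h ⟨p', hp', hph, hhp⟩
  have hT_swap : Covariant M M (fun v x => x + v) (Function.swap T) := fun v _ _ hxy => hT v hxy
  exact ⟨p + p', P.add_mem hp hp', rel_add_add_of_rel_add hT hpq hph,
    rel_add_add_of_rel_add (T := Function.swap T) hT_swap hqp hhp⟩

end Translation

/-- For a monotone relation `R`, a configuration `c` and a periodic
relation `P ⊆ P_c`, we have `Q + H ⊆ Q`. -/
theorem qSet_add_hSet_subset {d : ℕ} (R : NVec d → NVec d → Prop)
    (hR : MonotoneRel R) (c : NVec d) (P : Set (NVec d × NVec d))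
    (hP : IsPeriodicRel P) (hPc : P ⊆ transformer R c) :
    ∀ q ∈ QSet R c P, ∀ h ∈ HSet R c P, q + h ∈ QSet R c P := by
  have hT := covariant_reflTransGen (μ := fun v x : NVec d => x + v) fun v x y hxy => hR x y hxy v
  exact qSet_add_hSet_subset_general hT c ⟨P, fun hp hq => hP.2 _ hp _ hq⟩
end

section
/- Let R ⊆ ℕ^d × ℕ^d be a monotone relation with reflexive transitive closure →*, let c ∈ ℕ^d, let P be a periodic relation with P ⊆ P_c := {(x,y) : c+x →* c+y}, and define Q := {q ∈ ℕ^d : ∃(x,y) ∈ P, c+x →* q and q →* c+y} and H := {h ∈ ℕ^d : c+h ∈ Q}. Let i be a coordinate such that the set {q(i) : q ∈ Q} is finite. Then h(i) = 0 for every h ∈ H; in particular, x(i) = y(i) = 0 for every (x,y) ∈ P. -/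
/-! By monotonicity, runs `c + x →* c + y` and `c + x' →* c + y'` compose to a run
`c + x + x' →* c + y + x' →* c + y + y'`. Hence `H` is closed under addition, so every multiple
`n • h` of an intraproduction is an intraproduction, and `c i + n * h i` takes only finitely many
values only if `h i = 0`. -/

theorem map_eq_zero_of_finite_image_add_left {A M : Type*} [AddMonoid A] [AddLeftCancelMonoid M]
    [IsAddTorsionFree M] (f : A →+ M) (S : AddSubmonoid A) (c : A)
    (hfin : ((fun s => f (c + s)) '' S).Finite) {s : A} (hs : s ∈ S) : f s = 0 := by
  have finite_multiples_map : (AddSubmonoid.multiples (f s) : Set M).Finite := by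
    refine (hfin.preimage (add_right_injective (f c)).injOn).subset ?_
    rintro _ ⟨n, rfl⟩
    exact ⟨n • s, S.nsmul_mem hs n, by simp⟩
  exact (isOfFinAddOrder_iff_eq_zero _).1 (finite_multiples.1 finite_multiples_map)

section

variable {d : ℕ} {R : NVec d → NVec d → Prop}

theorem MonotoneRel.reflTransGen (hR : MonotoneRel R) :
    MonotoneRel (Relation.ReflTransGen R) :=
  fun _ _ hxy v => hxy.lift (· + v) fun a b hab => hR a b hab v

theorem MonotoneRel.isPeriodicRel_transformer (hR : MonotoneRel R) (c : NVec d) :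
    IsPeriodicRel (transformer R c) := by
  refine ⟨.refl, fun p hp q hq => ?_⟩
  have run_p : Relation.ReflTransGen R (c + (p.1 + q.1)) (c + (p.2 + q.1)) := by
    simpa only [add_assoc] using hR.reflTransGen _ _ hp q.1
  have run_q : Relation.ReflTransGen R (c + (p.2 + q.1)) (c + (p.2 + q.2)) := by
    simpa only [add_assoc, add_comm p.2] using hR.reflTransGen _ _ hq p.2
  exact run_p.trans run_q

/-- The set `H` of intraproductions as an additive submonoid of `ℕ^d`, so that multiples of an
intraproduction are again intraproductions. -/
def intraproductionSubmonoid (hR : MonotoneRel R) (c : NVec d) {P : Set (NVec d × NVec d)}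
    (hP : IsPeriodicRel P) : AddSubmonoid (NVec d) where
  carrier := HSet R c P
  zero_mem' := ⟨(0, 0), hP.1, .refl, .refl⟩
  add_mem' := by
    rintro h k ⟨p, hp, hp_h, h_hp⟩ ⟨q, hq, hq_k, k_hq⟩
    have add_mem := (hR.isPeriodicRel_transformer c).2
    exact ⟨(p.1 + q.1, p.2 + q.2), hP.2 p hp q hq,
      add_mem (p.1, h) hp_h (q.1, k) hq_k, add_mem (h, p.2) h_hp (k, q.2) k_hq⟩

end

/-- For a monotone relation `R`, a configuration `c` and a periodic
relation `P ⊆ P_c`: if coordinate `i` is bounded on `Q` (the set `{q(i) : q ∈ Q}` is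
finite), then every intraproduction `h ∈ H` has `h(i) = 0`; in particular
`x(i) = y(i) = 0` for every `(x,y) ∈ P`. -/
theorem bounded_coordinate_zero {d : ℕ} (R : NVec d → NVec d → Prop)
    (hR : MonotoneRel R) (c : NVec d) (P : Set (NVec d × NVec d))
    (hP : IsPeriodicRel P) (hPc : P ⊆ transformer R c)
    (i : Fin d) (hb : ((fun q : NVec d => q i) '' QSet R c P).Finite) :
    (∀ h ∈ HSet R c P, h i = 0) ∧ ∀ p ∈ P, p.1 i = 0 ∧ p.2 i = 0 := by
  have finite_image : ((fun h => (c + h) i) '' HSet R c P).Finite :=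
    hb.subset (Set.image_subset_iff.2 fun h hh => ⟨c + h, hh, rfl⟩)
  have apply_eq_zero : ∀ h ∈ HSet R c P, h i = 0 := fun _ hh =>
    map_eq_zero_of_finite_image_add_left (Pi.evalAddMonoidHom _ i)
      (intraproductionSubmonoid hR c hP) c finite_image hh
  refine ⟨apply_eq_zero, fun p hp => ⟨apply_eq_zero p.1 ?_, apply_eq_zero p.2 ?_⟩⟩
  · exact ⟨p, hp, .refl, hPc hp⟩
  · exact ⟨p, hp, hPc hp, .refl⟩
end
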